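/- (Density recovery at interior points, iterated limit.) Let X ⊆ ℝⁿ be a compact set equal to the closure of its interior, let f : X → ℝ be continuous with 0 < m ≤ f(y) ≤ M < ∞ for all y ∈ X, and let μ be the Borel measure on ℝⁿ with dμ = f dλ on X (so that the support of μ is X). For each x in the interior of X and each ε > 0, let φ_{x,ε} : ℝⁿ → [0, ∞) be measurable with 0 < ∫_{ℝⁿ} φ_{x,ε}² dλ < ∞, and assume the energy-concentration property: for every δ > 0, ∫_{{y : ‖y − x‖ > δ}} φ_{x,ε}² dλ / ∫_{ℝⁿ} φ_{x,ε}² dλ → 0 as ε → 0. For a natural number d define D_{d,ε}(x) := sup { (∫_X φ_{x,ε}(y) p(y) dλ(y))² : p a real polynomial in n variables of total degree at most d with ∫ p² dμ = 1 }. Then for every x in the interior of X, the inner limit L_ε(x) := lim_{d → ∞} D_{d,ε}(x) exists for each ε > 0, equals ∫_X φ_{x,ε}(y)²/f(y) dλ(y), and lim_{ε → 0} [ L_ε(x) / ∫_{ℝⁿ} φ_{x,ε}(y)² dλ(y) ] = 1/f(x). -/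

import Mathlib

open MeasureTheory MvPolynomial Filter

/-!
Put `μ = f dλ` and `g = φ / f`. Then `∫ φ p dλ = ⟪g, p⟫` in `L²(μ)`, so `D_d` is the squared
norm of the orthogonal projection of `g` onto the polynomials of degree at most `d`. Polynomials
are dense in `L²(μ)`, hence `D_d → ‖g‖² = ∫ φ² / f dλ`. After division by `∫ φ² dλ` this is an
average of `1 / f` against a probability density that concentrates at `x`.
-/

open scoped Topology ENNReal RealInnerProductSpace

section Projection

variable {E : Type*} [NormedAddCommGroup E] [InnerProductSpace ℝ E]

-- For `V = ⊥` the set is empty and both sides are `0`.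
theorem sSup_inner_sq_eq_norm_starProjection_sq (V : Submodule ℝ E) [V.HasOrthogonalProjection]
    (g : E) :
    sSup {t : ℝ | ∃ v ∈ V, ‖v‖ = 1 ∧ t = ⟪g, v⟫ ^ 2} = ‖V.starProjection g‖ ^ 2 := by
  set w := V.starProjection g with hw
  have hwV : w ∈ V := V.starProjection_apply_mem g
  have inner_eq : ∀ v ∈ V, ⟪g, v⟫ = ⟪w, v⟫ := fun v hv ↦ by
    rw [hw, V.inner_starProjection_left_eq_right, V.starProjection_eq_self_iff.2 hv]
  have le_norm_sq : ∀ t ∈ {t : ℝ | ∃ v ∈ V, ‖v‖ = 1 ∧ t = ⟪g, v⟫ ^ 2}, t ≤ ‖w‖ ^ 2 := by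
    rintro _ ⟨v, hv, hv1, rfl⟩
    rw [inner_eq v hv, sq_le_sq, abs_norm]
    simpa [hv1] using abs_real_inner_le_norm w v
  refine le_antisymm (Real.sSup_le le_norm_sq (sq_nonneg _)) ?_
  rcases eq_or_ne w 0 with h0 | h0
  · rw [h0, norm_zero, zero_pow two_ne_zero]
    refine Real.sSup_nonneg ?_
    rintro _ ⟨v, -, -, rfl⟩
    exact sq_nonneg _
  · refine le_csSup ⟨_, le_norm_sq⟩ ⟨‖w‖⁻¹ • w, V.smul_mem _ hwV, norm_smul_inv_norm h0, ?_⟩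
    rw [inner_eq _ (V.smul_mem _ hwV), inner_smul_right, real_inner_self_eq_norm_sq]
    have : ‖w‖ ≠ 0 := norm_ne_zero_iff.2 h0
    field_simp

theorem tendsto_sSup_inner_sq {κ : Type*} [Preorder κ] {V : κ → Submodule ℝ E}
    [∀ k, (V k).HasOrthogonalProjection] (hV : Monotone V)
    (hdense : (⨆ k, V k).topologicalClosure = ⊤) (g : E) :
    Tendsto (fun k ↦ sSup {t : ℝ | ∃ v ∈ V k, ‖v‖ = 1 ∧ t = ⟪g, v⟫ ^ 2}) atTop
      (𝓝 (‖g‖ ^ 2)) := by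
  simp only [sSup_inner_sq_eq_norm_starProjection_sq]
  exact ((Submodule.starProjection_tendsto_self V hV g hdense.ge).norm).pow 2

end Projection

section L2

variable {α : Type*} [MeasurableSpace α] {μ : Measure α}

theorem inner_toLp_eq_integral_mul {g h : α → ℝ} (hg : MemLp g 2 μ) (hh : MemLp h 2 μ) :
    ⟪hg.toLp g, hh.toLp h⟫ = ∫ y, g y * h y ∂μ := by
  rw [L2.inner_def]
  refine integral_congr_ae ?_
  filter_upwards [hg.coeFn_toLp, hh.coeFn_toLp] with y hgy hhy
  rw [hgy, hhy]
  exact mul_comm _ _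

theorem norm_toLp_sq_eq_integral_sq {g : α → ℝ} (hg : MemLp g 2 μ) :
    ‖hg.toLp g‖ ^ 2 = ∫ y, g y ^ 2 ∂μ := by
  rw [← real_inner_self_eq_norm_sq, inner_toLp_eq_integral_mul]
  simp only [pow_two]

end L2

section PolynomialDensity

variable {ι : Type*} {X : Set (EuclideanSpace ℝ ι)}

theorem continuous_eval_euclideanSpace (p : MvPolynomial ι ℝ) :
    Continuous fun y : EuclideanSpace ℝ ι ↦ eval y p :=
  (MvPolynomial.continuous_eval p).comp (PiLp.continuous_ofLp 2 _)

theorem exists_mvPolynomial_near_of_isCompact (hX : IsCompact X)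
    (g : C(EuclideanSpace ℝ ι, ℝ)) {ε : ℝ} (hε : 0 < ε) :
    ∃ p : MvPolynomial ι ℝ, ∀ y ∈ X, |g y - eval y p| < ε := by
  let coord (i : ι) : C(EuclideanSpace ℝ ι, ℝ) := ⟨fun y ↦ y i, PiLp.continuous_apply 2 _ i⟩
  have aeval_coord (p : MvPolynomial ι ℝ) (y : EuclideanSpace ℝ ι) :
      aeval coord p y = eval y p := by
    induction p using MvPolynomial.induction_on with
    | C a => simp
    | add p q hp hq => simp [hp, hq]
    | mul_X p i hp => simp [hp, coord]
  have separates : (aeval coord : MvPolynomial ι ℝ →ₐ[ℝ] _).range.SeparatesPoints := by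
    intro x y hxy
    obtain ⟨i, hi⟩ : ∃ i, x i ≠ y i := by
      by_contra! h
      exact hxy (PiLp.ext h)
    exact ⟨coord i, ⟨coord i, ⟨MvPolynomial.X i, aeval_X _ _⟩, rfl⟩, hi⟩
  obtain ⟨_, ⟨p, rfl⟩, hp⟩ :=
    ContinuousMap.exists_mem_subalgebra_near_continuous_of_isCompact_of_separatesPoints
      separates g hX hε
  refine ⟨p, fun y hy ↦ ?_⟩
  rw [abs_sub_comm, ← aeval_coord]
  exact hp y hy

variable {μ : Measure (EuclideanSpace ℝ ι)} [IsFiniteMeasure μ]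

theorem memLp_eval_of_isCompact [Countable ι] (hX : IsCompact X) (hμX : ∀ᵐ y ∂μ, y ∈ X) (q : ℝ≥0∞)
    (p : MvPolynomial ι ℝ) :
    MemLp (fun y : EuclideanSpace ℝ ι ↦ eval y p) q μ := by
  obtain ⟨C, hC⟩ :=
    hX.exists_bound_of_continuousOn (continuous_eval_euclideanSpace p).continuousOn
  exact .of_bound (continuous_eval_euclideanSpace p).aestronglyMeasurable C (hμX.mono hC)

theorem exists_mvPolynomial_eLpNorm_sub_le [Finite ι] (hX : IsCompact X) (hμX : ∀ᵐ y ∂μ, y ∈ X)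
    {q : ℝ≥0∞} (hq : 1 ≤ q) (hq_top : q ≠ ∞) {g : EuclideanSpace ℝ ι → ℝ} (hg : MemLp g q μ)
    {ε : ℝ≥0∞} (hε : ε ≠ 0) :
    ∃ p : MvPolynomial ι ℝ, eLpNorm (fun y ↦ g y - eval y p) q μ ≤ ε := by
  have := Fintype.ofFinite ι
  have hε2 : ε / 2 ≠ 0 := (ENNReal.half_pos hε).ne'
  obtain ⟨h, hgh, hh⟩ := hg.exists_boundedContinuous_eLpNorm_sub_le hq_top hε2
  have hmass : μ Set.univ ^ q.toReal⁻¹ ≠ ∞ :=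
    ENNReal.rpow_ne_top_of_nonneg (inv_nonneg.2 ENNReal.toReal_nonneg) (measure_ne_top _ _)
  obtain ⟨η, hη, hηε⟩ := ENNReal.exists_nnreal_pos_mul_lt hmass hε2
  obtain ⟨p, hp⟩ := exists_mvPolynomial_near_of_isCompact hX h.toContinuousMap
    (NNReal.coe_pos.2 hη)
  have hhp : eLpNorm (fun y ↦ h y - eval y p) q μ ≤ ε / 2 := calc
    _ ≤ μ Set.univ ^ q.toReal⁻¹ * ENNReal.ofReal η :=
      eLpNorm_le_of_ae_bound (hμX.mono fun y hy ↦ (hp y hy).le)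
    _ ≤ ε / 2 := by
      rw [ENNReal.ofReal_coe_nnreal, mul_comm]
      exact hηε.le
  refine ⟨p, ?_⟩
  calc eLpNorm (fun y ↦ g y - eval y p) q μ
      = eLpNorm ((g - ⇑h) + fun y ↦ h y - eval y p) q μ := by
        congr 1 with y
        exact (sub_add_sub_cancel _ _ _).symm
    _ ≤ eLpNorm (g - ⇑h) q μ + eLpNorm (fun y ↦ h y - eval y p) q μ :=
      eLpNorm_add_le (hg.sub hh).aestronglyMeasurable
        (hh.sub (memLp_eval_of_isCompact hX hμX q p)).aestronglyMeasurable hq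
    _ ≤ ε / 2 + ε / 2 := add_le_add hgh hhp
    _ = ε := ENNReal.add_halves ε

end PolynomialDensity

section RestrictTotalDegree

variable (σ R : Type*) [CommSemiring R]

theorem iSup_restrictTotalDegree_eq_top : ⨆ d, restrictTotalDegree σ R d = ⊤ :=
  eq_top_iff.2 fun p _ ↦
    Submodule.mem_iSup_of_mem p.totalDegree ((mem_restrictTotalDegree σ _ p).2 le_rfl)

theorem monotone_restrictTotalDegree : Monotone (restrictTotalDegree σ R) :=
  fun _ _ hde p hp ↦ (mem_restrictTotalDegree σ _ p).2
    (((mem_restrictTotalDegree σ _ p).1 hp).trans hde)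

end RestrictTotalDegree

section ChristoffelDarboux

variable {ι : Type*} {X : Set (EuclideanSpace ℝ ι)} {μ : Measure (EuclideanSpace ℝ ι)}

/-- The diagonal value `D_d` of the density-estimator mollified Christoffel–Darboux kernel of `μ`
for the mollifier `φ`, by its variational characterization. The mollifier is integrated against
the reference measure `ν`, the constraint on the polynomials is in `L²(μ)`. -/
noncomputable def mollifiedCDDiag (ν μ : Measure (EuclideanSpace ℝ ι))
    (φ : EuclideanSpace ℝ ι → ℝ) (d : ℕ) : ℝ :=
  sSup {t : ℝ | ∃ p : MvPolynomial ι ℝ, p.totalDegree ≤ d ∧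
    (∫ y, (eval y p) ^ 2 ∂μ) = 1 ∧ t = (∫ y, φ y * eval y p ∂ν) ^ 2}

/-- The map sending a polynomial to its class in `L²(μ)`, for a measure `μ` with finite moments
of all orders. It need not be injective. -/
noncomputable def polynomialToL2
    (hμ : ∀ p : MvPolynomial ι ℝ, MemLp (fun y : EuclideanSpace ℝ ι ↦ eval y p) 2 μ) :
    MvPolynomial ι ℝ →ₗ[ℝ] Lp ℝ 2 μ where
  toFun p := (hμ p).toLp _
  map_add' p q := by
    rw [← MemLp.toLp_add]
    exact MemLp.toLp_congr _ _ (.of_forall fun y ↦ map_add (eval _) p q)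
  map_smul' c p := by
    rw [RingHom.id_apply, ← MemLp.toLp_const_smul]
    exact MemLp.toLp_congr _ _ (.of_forall fun y ↦ smul_eval _ p c)

theorem denseRange_polynomialToL2 [Finite ι] [IsFiniteMeasure μ] (hX : IsCompact X)
    (hμX : ∀ᵐ y ∂μ, y ∈ X) :
    DenseRange (polynomialToL2 (memLp_eval_of_isCompact hX hμX 2)) := by
  intro g
  rw [EMetric.mem_closure_iff]
  intro ε hε
  obtain ⟨δ, hδ, hδε⟩ := exists_between hε
  obtain ⟨p, hp⟩ := exists_mvPolynomial_eLpNorm_sub_le hX hμX one_le_two ENNReal.ofNat_ne_top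
    (Lp.memLp g) hδ.ne'
  refine ⟨_, ⟨p, rfl⟩, ?_⟩
  calc edist g (polynomialToL2 (memLp_eval_of_isCompact hX hμX 2) p)
      = eLpNorm (fun y ↦ g y - eval y p) 2 μ := by
        nth_rewrite 1 [← Lp.toLp_coeFn g (Lp.memLp g)]
        exact Lp.edist_toLp_toLp _ _ (Lp.memLp g) (memLp_eval_of_isCompact hX hμX 2 p)
    _ < ε := hp.trans_lt hδε

theorem mollifiedCDDiag_self_eq_sSup_inner_sq
    (hμ : ∀ p : MvPolynomial ι ℝ, MemLp (fun y : EuclideanSpace ℝ ι ↦ eval y p) 2 μ)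
    {g : EuclideanSpace ℝ ι → ℝ} (hg : MemLp g 2 μ) (d : ℕ) :
    mollifiedCDDiag μ μ g d =
      sSup {t : ℝ | ∃ v ∈ (restrictTotalDegree ι ℝ d).map (polynomialToL2 hμ),
        ‖v‖ = 1 ∧ t = ⟪hg.toLp g, v⟫ ^ 2} := by
  have inner_eq (p : MvPolynomial ι ℝ) :
      ⟪hg.toLp g, polynomialToL2 hμ p⟫ = ∫ y, g y * eval y p ∂μ :=
    inner_toLp_eq_integral_mul hg (hμ p)
  have norm_eq_one_iff (p : MvPolynomial ι ℝ) :
      ‖polynomialToL2 hμ p‖ = 1 ↔ ∫ y, (eval y p) ^ 2 ∂μ = 1 := by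
    rw [← norm_toLp_sq_eq_integral_sq (hμ p), pow_eq_one_iff_of_nonneg (norm_nonneg _) two_ne_zero]
    rfl
  simp only [mollifiedCDDiag, Submodule.mem_map, exists_exists_and_eq_and,
    mem_restrictTotalDegree, norm_eq_one_iff, inner_eq]

theorem tendsto_mollifiedCDDiag_self [Finite ι] [IsFiniteMeasure μ] (hX : IsCompact X)
    (hμX : ∀ᵐ y ∂μ, y ∈ X) {g : EuclideanSpace ℝ ι → ℝ} (hg : MemLp g 2 μ) :
    Tendsto (mollifiedCDDiag μ μ g) atTop (𝓝 (∫ y, g y ^ 2 ∂μ)) := by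
  let T := polynomialToL2 (memLp_eval_of_isCompact hX hμX 2)
  have monotone_map : Monotone fun d ↦ (restrictTotalDegree ι ℝ d).map T :=
    fun _ _ hde ↦ Submodule.map_mono (monotone_restrictTotalDegree ι ℝ hde)
  have dense_iSup : (⨆ d, (restrictTotalDegree ι ℝ d).map T).topologicalClosure = ⊤ := by
    rw [← Submodule.map_iSup, iSup_restrictTotalDegree_eq_top, Submodule.map_top]
    exact Submodule.dense_iff_topologicalClosure_eq_top.1 (denseRange_polynomialToL2 hX hμX)
  rw [← norm_toLp_sq_eq_integral_sq hg]
  exact (tendsto_sSup_inner_sq monotone_map dense_iSup (hg.toLp g)).congr fun d ↦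
    (mollifiedCDDiag_self_eq_sSup_inner_sq _ hg d).symm

end ChristoffelDarboux

section WithDensity

variable {α : Type*} [MeasurableSpace α] {ν : Measure α} {f : α → ℝ}

theorem integral_withDensity_ofReal (hf : AEMeasurable f ν) (hf0 : 0 ≤ᵐ[ν] f) (g : α → ℝ) :
    ∫ y, g y ∂ν.withDensity (fun y ↦ ENNReal.ofReal (f y)) = ∫ y, f y * g y ∂ν := by
  rw [integral_withDensity_eq_integral_toReal_smul₀ hf.ennreal_ofReal
    (.of_forall fun _ ↦ ENNReal.ofReal_lt_top)]
  refine integral_congr_ae (hf0.mono fun y hy ↦ ?_)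
  simp only [ENNReal.toReal_ofReal hy, smul_eq_mul]

theorem memLp_div_withDensity_ofReal (hf : AEMeasurable f ν) (hfpos : ∀ᵐ y ∂ν, 0 < f y)
    {φ : α → ℝ} (hφ : AEMeasurable φ ν) (hφf : Integrable (fun y ↦ φ y ^ 2 / f y) ν) :
    MemLp (fun y ↦ φ y / f y) 2 (ν.withDensity fun y ↦ ENNReal.ofReal (f y)) := by
  have hmeas : AEStronglyMeasurable (fun y ↦ φ y / f y)
      (ν.withDensity fun y ↦ ENNReal.ofReal (f y)) :=
    (hφ.div hf).aestronglyMeasurable.mono_ac (withDensity_absolutelyContinuous _ _)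
  rw [memLp_two_iff_integrable_sq hmeas]
  refine (integrable_withDensity_iff_integrable_smul₀ hf.real_toNNReal).2 (hφf.congr ?_)
  filter_upwards [hfpos] with y hy
  rw [NNReal.smul_def, smul_eq_mul, Real.coe_toNNReal _ hy.le]
  field_simp

end WithDensity

section InnerLimit

variable {ι : Type*} {X : Set (EuclideanSpace ℝ ι)}
  {ν : Measure (EuclideanSpace ℝ ι)} {f φ : EuclideanSpace ℝ ι → ℝ}

theorem mollifiedCDDiag_withDensity_ofReal (hf : AEMeasurable f ν) (hfpos : ∀ᵐ y ∂ν, 0 < f y)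
    (φ : EuclideanSpace ℝ ι → ℝ) :
    mollifiedCDDiag ν (ν.withDensity fun y ↦ ENNReal.ofReal (f y)) φ =
      mollifiedCDDiag (ν.withDensity fun y ↦ ENNReal.ofReal (f y))
        (ν.withDensity fun y ↦ ENNReal.ofReal (f y)) (fun y ↦ φ y / f y) := by
  have integral_eq (p : MvPolynomial ι ℝ) :
      ∫ y, φ y / f y * eval y p ∂ν.withDensity (fun y ↦ ENNReal.ofReal (f y)) =
        ∫ y, φ y * eval y p ∂ν := by
    rw [integral_withDensity_ofReal hf (hfpos.mono fun _ ↦ le_of_lt)]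
    refine integral_congr_ae (hfpos.mono fun y hy ↦ ?_)
    field_simp
  funext d
  simp only [mollifiedCDDiag, integral_eq]

theorem tendsto_mollifiedCDDiag_withDensity [Finite ι] (hX : IsCompact X) (hνX : ∀ᵐ y ∂ν, y ∈ X)
    (hf : Integrable f ν) (hfpos : ∀ᵐ y ∂ν, 0 < f y) (hφ : AEMeasurable φ ν)
    (hφf : Integrable (fun y ↦ φ y ^ 2 / f y) ν) :
    Tendsto (mollifiedCDDiag ν (ν.withDensity fun y ↦ ENNReal.ofReal (f y)) φ) atTop
      (𝓝 (∫ y, φ y ^ 2 / f y ∂ν)) := by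
  have hfm : AEMeasurable f ν := hf.aemeasurable
  have : IsFiniteMeasure (ν.withDensity fun y ↦ ENNReal.ofReal (f y)) :=
    isFiniteMeasure_withDensity_ofReal hf.2
  have integral_sq_div : ∫ y, (φ y / f y) ^ 2 ∂ν.withDensity (fun y ↦ ENNReal.ofReal (f y)) =
      ∫ y, φ y ^ 2 / f y ∂ν := by
    rw [integral_withDensity_ofReal hfm (hfpos.mono fun _ ↦ le_of_lt)]
    refine integral_congr_ae (hfpos.mono fun y hy ↦ ?_)
    field_simp
  rw [mollifiedCDDiag_withDensity_ofReal hfm hfpos, ← integral_sq_div]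
  exact tendsto_mollifiedCDDiag_self hX ((withDensity_absolutelyContinuous ν _).ae_le hνX)
    (memLp_div_withDensity_ofReal hfm hfpos hφ hφf)

end InnerLimit

theorem norm_inv_le_inv_of_le {m a : ℝ} (hm : 0 < m) (ha : m ≤ a) : ‖a⁻¹‖ ≤ m⁻¹ := by
  rw [norm_inv, Real.norm_of_nonneg (hm.le.trans ha)]
  exact inv_anti₀ hm ha

section Concentration

variable {F : Type*} [NormedAddCommGroup F] [NormedSpace ℝ F] [CompleteSpace F]

theorem norm_integral_smul_sub_le {α : Type*} [MeasurableSpace α] {ν : Measure α} {ψ : α → ℝ}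
    (hψ0 : ∀ y, 0 ≤ ψ y) (hψ : Integrable ψ ν) {h : α → F}
    (hψh : Integrable (fun y ↦ ψ y • h y) ν) {c : F} {S : Set α} (hS : MeasurableSet S)
    {η K : ℝ} (hη : 0 ≤ η) (hnear : ∀ y ∉ S, ‖h y - c‖ ≤ η) (hfar : ∀ y ∈ S, ‖h y - c‖ ≤ K) :
    ‖∫ y, ψ y • h y ∂ν - (∫ y, ψ y ∂ν) • c‖ ≤ η * ∫ y, ψ y ∂ν + K * ∫ y in S, ψ y ∂ν := by
  have hψS : Integrable (S.indicator ψ) ν := hψ.indicator hS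
  rw [← integral_smul_const, ← integral_sub hψh (hψ.smul_const c), ← integral_indicator hS,
    ← integral_const_mul, ← integral_const_mul, ← integral_add (hψ.const_mul η) (hψS.const_mul K)]
  refine norm_integral_le_of_norm_le ((hψ.const_mul η).add (hψS.const_mul K))
    (.of_forall fun y ↦ ?_)
  rw [← smul_sub, norm_smul, Real.norm_of_nonneg (hψ0 y)]
  by_cases hy : y ∈ S
  · rw [Set.indicator_of_mem hy]
    nlinarith [mul_le_mul_of_nonneg_left (hfar y hy) (hψ0 y), mul_nonneg hη (hψ0 y)]
  · rw [Set.indicator_of_notMem hy, mul_zero, add_zero, mul_comm]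
    exact mul_le_mul_of_nonneg_right (hnear y hy) (hψ0 y)

variable {E : Type*} [PseudoMetricSpace E] [MeasurableSpace E] [OpensMeasurableSpace E]
  {ν : Measure E} {κ : Type*} {l : Filter κ} {ψ : κ → E → ℝ} {x : E}

theorem tendsto_inv_integral_smul_integral_smul (hψ0 : ∀ i y, 0 ≤ ψ i y)
    (hψ : ∀ᶠ i in l, Integrable (ψ i) ν) (hψpos : ∀ᶠ i in l, 0 < ∫ y, ψ i y ∂ν)
    (hconc : ∀ δ : ℝ, 0 < δ →
      Tendsto (fun i ↦ (∫ y in {y | δ < dist y x}, ψ i y ∂ν) / ∫ y, ψ i y ∂ν) l (𝓝 0))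
    {h : E → F} (hmeas : AEStronglyMeasurable h ν) {C : ℝ} (hC : ∀ y, ‖h y‖ ≤ C)
    (hx : ContinuousAt h x) :
    Tendsto (fun i ↦ (∫ y, ψ i y ∂ν)⁻¹ • ∫ y, ψ i y • h y ∂ν) l (𝓝 (h x)) := by
  rw [Metric.tendsto_nhds]
  intro η hη
  obtain ⟨δ, hδ, hnear⟩ := Metric.nhds_basis_closedBall.eventually_iff.1
    (Metric.continuousAt_iff'.1 hx (η / 2) (half_pos hη))
  have hsmall : ∀ᶠ i in l,
      2 * C * ((∫ y in {y | δ < dist y x}, ψ i y ∂ν) / ∫ y, ψ i y ∂ν) < η / 2 :=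
    ((hconc δ hδ).const_mul (2 * C)).eventually_lt_const (by rw [mul_zero]; exact half_pos hη)
  filter_upwards [hψ, hψpos, hsmall] with i hψi hpos hfar
  have hS : MeasurableSet {y | δ < dist y x} :=
    (isOpen_lt continuous_const (by fun_prop)).measurableSet
  have hψh : Integrable (fun y ↦ ψ i y • h y) ν :=
    hψi.smul_bdd C hmeas (.of_forall hC)
  have hbound := norm_integral_smul_sub_le (hψ0 i) hψi hψh (c := h x) hS (half_pos hη).le
    (fun y hy ↦ (dist_eq_norm (h y) (h x) ▸ hnear (Metric.mem_closedBall.2 (not_lt.1 hy))).le)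
    (fun y _ ↦ (norm_sub_le_of_le (hC y) (hC x)).trans_eq (two_mul C).symm)
  set m := ∫ y, ψ i y ∂ν
  have hm : m⁻¹ • ∫ y, ψ i y • h y ∂ν - h x = m⁻¹ • (∫ y, ψ i y • h y ∂ν - m • h x) := by
    rw [smul_sub, inv_smul_smul₀ hpos.ne']
  calc dist (m⁻¹ • ∫ y, ψ i y • h y ∂ν) (h x)
      = m⁻¹ * ‖∫ y, ψ i y • h y ∂ν - m • h x‖ := by
        rw [dist_eq_norm, hm, norm_smul, Real.norm_of_nonneg (inv_nonneg.2 hpos.le)]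
    _ ≤ m⁻¹ * (η / 2 * m + 2 * C * ∫ y in {y | δ < dist y x}, ψ i y ∂ν) := by gcongr
    _ = η / 2 + 2 * C * ((∫ y in {y | δ < dist y x}, ψ i y ∂ν) / m) := by field_simp
    _ < η := by linarith

theorem tendsto_setIntegral_div_div_integral {X : Set E} (hX : MeasurableSet X) (hxX : X ∈ 𝓝 x)
    {f : E → ℝ} (hf : AEMeasurable f (ν.restrict X)) {m : ℝ} (hm : 0 < m)
    (hfm : ∀ y ∈ X, m ≤ f y) (hfx : ContinuousAt f x) (hψ0 : ∀ i y, 0 ≤ ψ i y)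
    (hψ : ∀ᶠ i in l, Integrable (ψ i) ν) (hψpos : ∀ᶠ i in l, 0 < ∫ y, ψ i y ∂ν)
    (hconc : ∀ δ : ℝ, 0 < δ →
      Tendsto (fun i ↦ (∫ y in {y | δ < dist y x}, ψ i y ∂ν) / ∫ y, ψ i y ∂ν) l (𝓝 0)) :
    Tendsto (fun i ↦ (∫ y in X, ψ i y / f y ∂ν) / ∫ y, ψ i y ∂ν) l (𝓝 (1 / f x)) := by
  have hmeas : AEStronglyMeasurable (X.indicator f⁻¹) ν :=
    (aestronglyMeasurable_indicator_iff hX).2 hf.inv.aestronglyMeasurable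
  have hbdd (y : E) : ‖X.indicator f⁻¹ y‖ ≤ m⁻¹ := by
    by_cases hy : y ∈ X
    · rw [Set.indicator_of_mem hy]
      exact norm_inv_le_inv_of_le hm (hfm y hy)
    · rw [Set.indicator_of_notMem hy, norm_zero]
      exact inv_nonneg.2 hm.le
  have hcont : ContinuousAt (X.indicator f⁻¹) x :=
    (hfx.inv₀ (hm.trans_le (hfm x (mem_of_mem_nhds hxX))).ne').congr
      (eventually_of_mem hxX fun y hy ↦ (Set.indicator_of_mem hy _).symm)
  have hlim := tendsto_inv_integral_smul_integral_smul hψ0 hψ hψpos hconc hmeas hbdd hcont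
  rw [Set.indicator_of_mem (mem_of_mem_nhds hxX), Pi.inv_apply] at hlim
  rw [one_div]
  refine hlim.congr fun i ↦ ?_
  rw [smul_eq_mul, inv_mul_eq_div, ← integral_indicator hX]
  simp only [smul_eq_mul, div_eq_mul_inv, ← Set.indicator_mul_right, Pi.inv_apply]

end Concentration

theorem integrableOn_sq_div {α : Type*} [MeasurableSpace α] {ν : Measure α} {X : Set α}
    (hX : MeasurableSet X) {f φ : α → ℝ} (hf : AEMeasurable f (ν.restrict X)) {m : ℝ} (hm : 0 < m)
    (hfm : ∀ y ∈ X, m ≤ f y) (hφ : MemLp φ 2 (ν.restrict X)) :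
    IntegrableOn (fun y ↦ φ y ^ 2 / f y) X ν :=
  hφ.integrable_sq.mul_bdd hf.inv.aestronglyMeasurable
    (ae_restrict_of_forall_mem hX fun y hy ↦ norm_inv_le_inv_of_le hm (hfm y hy))

theorem dmcd_density_recovery_iterated_limit_general {ι : Type*} [Fintype ι]
    {ν : Measure (EuclideanSpace ℝ ι)} {X : Set (EuclideanSpace ℝ ι)} (hX : IsCompact X)
    {x : EuclideanSpace ℝ ι} (hxX : X ∈ 𝓝 x) {f : EuclideanSpace ℝ ι → ℝ}
    (hf : IntegrableOn f X ν) (hfx : ContinuousAt f x) {m : ℝ} (hm : 0 < m)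
    (hfm : ∀ y ∈ X, m ≤ f y) {φ : ℝ → EuclideanSpace ℝ ι → ℝ}
    (hφ : ∀ ε : ℝ, 0 < ε → MemLp (φ ε) 2 ν) (hφpos : ∀ ε : ℝ, 0 < ε → 0 < ∫ y, φ ε y ^ 2 ∂ν)
    (hconc : ∀ δ : ℝ, 0 < δ →
      Tendsto (fun ε ↦ (∫ y in {y | δ < dist y x}, φ ε y ^ 2 ∂ν) / ∫ y, φ ε y ^ 2 ∂ν)
        (𝓝[>] 0) (𝓝 0)) :
    (∀ ε : ℝ, 0 < ε →
      Tendsto (mollifiedCDDiag (ν.restrict X)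
        ((ν.restrict X).withDensity fun y ↦ ENNReal.ofReal (f y)) (φ ε)) atTop
        (𝓝 (∫ y in X, φ ε y ^ 2 / f y ∂ν))) ∧
      Tendsto (fun ε ↦ (∫ y in X, φ ε y ^ 2 / f y ∂ν) / ∫ y, φ ε y ^ 2 ∂ν)
        (𝓝[>] 0) (𝓝 (1 / f x)) := by
  have hXm : MeasurableSet X := hX.measurableSet
  refine ⟨fun ε hε ↦ ?_, ?_⟩
  · have hφX : MemLp (φ ε) 2 (ν.restrict X) := (hφ ε hε).restrict X
    exact tendsto_mollifiedCDDiag_withDensity hX (ae_restrict_mem hXm) hf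
      (ae_restrict_of_forall_mem hXm fun y hy ↦ hm.trans_le (hfm y hy)) hφX.aemeasurable
      (integrableOn_sq_div hXm hf.aemeasurable hm hfm hφX)
  · exact tendsto_setIntegral_div_div_integral hXm hxX hf.aemeasurable hm hfm hfx
      (fun ε y ↦ sq_nonneg (φ ε y))
      (eventually_mem_nhdsWithin.mono fun ε hε ↦ (hφ ε hε).integrable_sq)
      (eventually_mem_nhdsWithin.mono hφpos) hconc

/-- Density recovery at interior points (iterated limit): let `X ⊆ ℝⁿ` be
compact and equal to the closure of its interior, let `μ = f dλ` on `X` with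
`0 < m ≤ f ≤ M` continuous, and for `x` interior to `X` and `ε > 0` let
`φ_{x,ε}` be nonnegative square-integrable mollifiers whose `L²` energy
concentrates around `x` as `ε → 0`.  Let `D_{d,ε}(x)` be the diagonal of the
density-estimator mollified Christoffel–Darboux kernel, given by its
variational characterization.  Then for every interior point `x`, for each
`ε > 0` the inner limit `lim_{d→∞} D_{d,ε}(x)` exists and equals
`∫_X φ_{x,ε}²/f dλ`, and
`lim_{ε→0} [ (∫_X φ_{x,ε}²/f dλ) / ∫ φ_{x,ε}² dλ ] = 1/f(x)`. -/
theorem dmcd_density_recovery_iterated_limit {n : ℕ}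
    (X : Set (EuclideanSpace ℝ (Fin n))) (hXc : IsCompact X)
    (hXreg : X = closure (interior X))
    (f : EuclideanSpace ℝ (Fin n) → ℝ) (hf : ContinuousOn f X)
    (m M : ℝ) (hm : 0 < m)
    (hfm : ∀ y ∈ X, m ≤ f y) (hfM : ∀ y ∈ X, f y ≤ M)
    (μ : Measure (EuclideanSpace ℝ (Fin n)))
    (hμ : μ = (volume.restrict X).withDensity fun y => ENNReal.ofReal (f y))
    (φ : EuclideanSpace ℝ (Fin n) → ℝ → EuclideanSpace ℝ (Fin n) → ℝ)
    (hφmeas : ∀ x ∈ interior X, ∀ ε : ℝ, 0 < ε → Measurable (φ x ε))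
    (hφnn : ∀ x ∈ interior X, ∀ ε : ℝ, 0 < ε → ∀ y, 0 ≤ φ x ε y)
    (hφpos : ∀ x ∈ interior X, ∀ ε : ℝ, 0 < ε → 0 < ∫ y, (φ x ε y) ^ 2)
    (hφint : ∀ x ∈ interior X, ∀ ε : ℝ, 0 < ε →
      Integrable (fun y => (φ x ε y) ^ 2) volume)
    (hconc : ∀ x ∈ interior X, ∀ δ : ℝ, 0 < δ →
      Tendsto (fun ε => (∫ y in {y | δ < dist y x}, (φ x ε y) ^ 2) /
          ∫ y, (φ x ε y) ^ 2)
        (nhdsWithin 0 (Set.Ioi 0)) (nhds 0))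
    (D : ℕ → ℝ → EuclideanSpace ℝ (Fin n) → ℝ)
    (hD : ∀ d ε x, D d ε x =
      sSup {t : ℝ | ∃ p : MvPolynomial (Fin n) ℝ, p.totalDegree ≤ d ∧
        (∫ y, (eval y p) ^ 2 ∂μ) = 1 ∧
        t = (∫ y in X, φ x ε y * eval y p) ^ 2}) :
    ∀ x ∈ interior X,
      (∀ ε : ℝ, 0 < ε →
        Tendsto (fun d => D d ε x) atTop
          (nhds (∫ y in X, (φ x ε y) ^ 2 / f y))) ∧
      Tendsto (fun ε => (∫ y in X, (φ x ε y) ^ 2 / f y) / ∫ y, (φ x ε y) ^ 2)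
        (nhdsWithin 0 (Set.Ioi 0)) (nhds (1 / f x)) := by
  subst hμ
  have hD_eq : ∀ ε x, (fun d ↦ D d ε x) = mollifiedCDDiag _ _ (φ x ε) :=
    fun ε x ↦ funext fun d ↦ hD d ε x
  simp only [hD_eq]
  exact fun x hx ↦ dmcd_density_recovery_iterated_limit_general hXc
    (mem_interior_iff_mem_nhds.1 hx) (hf.integrableOn_compact hXc)
    (hf.continuousAt (mem_interior_iff_mem_nhds.1 hx)) hm hfm
    (fun ε hε ↦ (memLp_two_iff_integrable_sq (hφmeas x hx ε hε).aestronglyMeasurable).2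
      (hφint x hx ε hε)) (hφpos x hx) (hconc x hx)
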